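/- Let n ≥ 1 and 1 ≤ m ≤ n be integers, and let α, β > −1 and γ > 0 be real numbers. Then the Aomoto–Selberg average satisfies ( ∫_{[0,1]^n} x₁x₂⋯x_m · |Δ_n(x)|^{2γ} ∏_{j=1}^n x_j^α (1−x_j)^β dx ) / ( ∫_{[0,1]^n} |Δ_n(x)|^{2γ} ∏_{j=1}^n x_j^α (1−x_j)^β dx ) = ∏_{j=1}^m ( α + 1 + (n−j)γ ) / ( α + β + 2 + (2n−j−1)γ ). -/

import Mathlib

open MeasureTheory Filter Real
open scoped BigOperators Topology

noncomputable section

/-- Vandermonde determinant `Δ_n(x) = ∏_{i<j} (x_i - x_j)`. -/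
def vdm {n : ℕ} (x : Fin n → ℝ) : ℝ :=
  ∏ i : Fin n, ∏ j ∈ Finset.Ioi i, (x i - x j)

/-- Lebesgue measure on the unit interval. -/
def mu1 : Measure ℝ := volume.restrict (Set.Ioo (0 : ℝ) 1)

instance : IsFiniteMeasure mu1 := by unfold mu1; infer_instance

/-- Product measure on the cube. -/
def muP (n : ℕ) : Measure (Fin n → ℝ) := Measure.pi fun _ => mu1

instance (n : ℕ) : IsFiniteMeasure (muP n) := by unfold muP; infer_instance

lemma muP_eq (n : ℕ) : muP n =
    (volume : Measure (Fin n → ℝ)).restrict (Set.univ.pi fun _ => Set.Ioo (0 : ℝ) 1) := by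
  unfold muP mu1
  rw [volume_pi, Measure.restrict_pi_pi]

lemma muP_eq' (n : ℕ) : muP n =
    (volume : Measure (Fin n → ℝ)).restrict (Set.univ.pi fun _ => Set.Icc (0 : ℝ) 1) := by
  rw [muP_eq]
  apply Measure.restrict_congr_set
  rw [volume_pi]
  exact Measure.pi_Ioo_ae_eq_pi_Icc

lemma ae_muP (n : ℕ) : ∀ᵐ x ∂(muP n), ∀ i, x i ∈ Set.Ioo (0 : ℝ) 1 := by
  rw [muP_eq]
  filter_upwards [ae_restrict_mem (MeasurableSet.univ_pi fun _ => measurableSet_Ioo)] with x hx i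
  exact hx i (Set.mem_univ i)

/-- the Selberg density -/
def sphi (α β γ : ℝ) {n : ℕ} (x : Fin n → ℝ) : ℝ :=
  |vdm x| ^ (2 * γ) * ∏ j, (x j ^ α * (1 - x j) ^ β)

lemma abs_vdm {n : ℕ} (x : Fin n → ℝ) : |vdm x| = |(Matrix.vandermonde x).det| := by
  rw [Matrix.det_vandermonde, vdm]
  simp only [Finset.abs_prod]
  refine Finset.prod_congr rfl fun i _ => Finset.prod_congr rfl fun j _ => abs_sub_comm _ _

lemma abs_vdm_perm {n : ℕ} (x : Fin n → ℝ) (σ : Equiv.Perm (Fin n)) :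
    |vdm (fun i => x (σ i))| = |vdm x| := by
  rw [abs_vdm, abs_vdm]
  have : Matrix.vandermonde (fun i => x (σ i)) = (Matrix.vandermonde x).submatrix σ id := rfl
  rw [this, Matrix.det_permute, abs_mul]
  rcases Int.units_eq_one_or (Equiv.Perm.sign σ) with h | h <;> simp [h]

lemma sphi_perm (α β γ : ℝ) {n : ℕ} (x : Fin n → ℝ) (σ : Equiv.Perm (Fin n)) :
    sphi α β γ (fun i => x (σ i)) = sphi α β γ x := by
  unfold sphi
  rw [abs_vdm_perm, Equiv.prod_comp σ (fun j => x j ^ α * (1 - x j) ^ β)]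

lemma integral_perm {n : ℕ} (σ : Equiv.Perm (Fin n)) (F : (Fin n → ℝ) → ℝ) :
    ∫ x, F (fun i => x (σ i)) ∂(muP n) = ∫ x, F x ∂(muP n) := by
  have h := measurePreserving_arrowCongr' (fun _ : Fin n => mu1) (fun _ : Fin n => mu1) σ.symm
    (MeasurableEquiv.refl ℝ) (fun _ => MeasurePreserving.id _)
  have := h.integral_comp' F
  exact this

lemma vdm_eq_zero {n : ℕ} (x : Fin n → ℝ) {i j : Fin n} (hij : i ≠ j) (h : x i = x j) :
    vdm x = 0 := by
  rw [← abs_eq_zero, abs_vdm, abs_eq_zero, Matrix.det_vandermonde_eq_zero_iff]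
  exact ⟨i, j, h, hij⟩

lemma sphi_eq_zero (α β : ℝ) {γ : ℝ} (hγ : 0 < γ) {n : ℕ} (x : Fin n → ℝ) {i j : Fin n}
    (hij : i ≠ j) (h : x i = x j) : sphi α β γ x = 0 := by
  unfold sphi
  rw [vdm_eq_zero x hij h, abs_zero, Real.zero_rpow (by positivity), zero_mul]

lemma vdm_succ {n : ℕ} (x : Fin (n + 1) → ℝ) :
    vdm x = (∏ j : Fin n, (x 0 - x j.succ)) * vdm (fun j => x j.succ) := by
  unfold vdm
  rw [Fin.prod_univ_succ, Fin.prod_Ioi_zero]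
  simp only [Fin.prod_Ioi_succ]

lemma abs_vdm_le_one {n : ℕ} (x : Fin n → ℝ) (hx : ∀ i, x i ∈ Set.Ioo (0 : ℝ) 1) :
    |vdm x| ≤ 1 := by
  unfold vdm
  simp only [Finset.abs_prod]
  refine Finset.prod_le_one (fun i _ => Finset.prod_nonneg fun j _ => abs_nonneg _) fun i _ =>
    Finset.prod_le_one (fun j _ => abs_nonneg _) fun j _ => ?_
  have h1 := hx i
  have h2 := hx j
  rw [abs_le]; constructor <;> linarith [h1.1, h1.2, h2.1, h2.2]

lemma measurable_vdm {n : ℕ} : Continuous (fun x : Fin n → ℝ => vdm x) := by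
  unfold vdm
  fun_prop

lemma measurable_sphi (α β γ : ℝ) {n : ℕ} : Measurable (fun x : Fin n → ℝ => sphi α β γ x) := by
  unfold sphi
  have := (measurable_vdm (n := n)).measurable
  fun_prop

lemma integrable_w {α β : ℝ} (hα : -1 < α) (hβ : -1 < β) :
    Integrable (fun t : ℝ => t ^ α * (1 - t) ^ β) mu1 := by
  have h := Complex.betaIntegral_convergent (u := ((α + 1 : ℝ) : ℂ)) (v := ((β + 1 : ℝ) : ℂ))
    (by simp; linarith) (by simp; linarith)
  rw [intervalIntegrable_iff_integrableOn_Ioo_of_le zero_le_one] at h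
  have h2 := h.norm
  refine h2.congr ?_
  filter_upwards [ae_restrict_mem measurableSet_Ioo] with t ht
  have e1 : ((α + 1 : ℝ) : ℂ) - 1 = (α : ℂ) := by push_cast; ring
  have e2 : ((β + 1 : ℝ) : ℂ) - 1 = (β : ℂ) := by push_cast; ring
  have e3 : (1 - (t : ℂ)) = ((1 - t : ℝ) : ℂ) := by push_cast; ring
  rw [e1, e2, e3, norm_mul, Complex.norm_cpow_eq_rpow_re_of_pos ht.1,
    Complex.norm_cpow_eq_rpow_re_of_pos (by linarith [ht.2])]
  simp

lemma integrable_prod_w {α β : ℝ} (hα : -1 < α) (hβ : -1 < β) (n : ℕ) :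
    Integrable (fun x : Fin n → ℝ => ∏ j, (x j ^ α * (1 - x j) ^ β)) (muP n) :=
  Integrable.fintype_prod (μ := fun _ => mu1) (f := fun _ t => t ^ α * (1 - t) ^ β)
    fun _ => integrable_w hα hβ

lemma w_pos (α β : ℝ) {t : ℝ} (ht : t ∈ Set.Ioo (0 : ℝ) 1) : 0 < t ^ α * (1 - t) ^ β :=
  mul_pos (rpow_pos_of_pos ht.1 _) (rpow_pos_of_pos (by linarith [ht.2]) _)

lemma sphi_nonneg (α β γ : ℝ) {n : ℕ} (x : Fin n → ℝ) (hx : ∀ i, x i ∈ Set.Ioo (0 : ℝ) 1) :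
    0 ≤ sphi α β γ x :=
  mul_nonneg (rpow_nonneg (abs_nonneg _) _) (Finset.prod_nonneg fun i _ => (w_pos α β (hx i)).le)

lemma integrable_sphi {α β γ : ℝ} (hα : -1 < α) (hβ : -1 < β) (hγ : 0 < γ) (n : ℕ) :
    Integrable (fun x : Fin n → ℝ => sphi α β γ x) (muP n) := by
  refine (integrable_prod_w hα hβ n).mono' (measurable_sphi α β γ).aestronglyMeasurable ?_
  filter_upwards [ae_muP n] with x hx
  rw [Real.norm_of_nonneg (sphi_nonneg α β γ x hx)]
  unfold sphi
  refine mul_le_of_le_one_left (Finset.prod_nonneg fun i _ => (w_pos α β (hx i)).le) ?_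
  exact rpow_le_one (abs_nonneg _) (abs_vdm_le_one x hx) (by positivity)

lemma prod_mem01 {n : ℕ} (S : Finset (Fin n)) (x : Fin n → ℝ) (hx : ∀ i, x i ∈ Set.Ioo (0 : ℝ) 1) :
    0 ≤ ∏ i ∈ S, x i ∧ ∏ i ∈ S, x i ≤ 1 :=
  ⟨Finset.prod_nonneg fun i _ => (hx i).1.le,
    Finset.prod_le_one (fun i _ => (hx i).1.le) fun i _ => (hx i).2.le⟩

lemma integrable_S {α β γ : ℝ} (hα : -1 < α) (hβ : -1 < β) (hγ : 0 < γ) {n : ℕ}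
    (S : Finset (Fin n)) :
    Integrable (fun x : Fin n → ℝ => (∏ i ∈ S, x i) * sphi α β γ x) (muP n) := by
  have hm := measurable_sphi α β γ (n := n)
  refine (integrable_sphi hα hβ hγ n).mono' (by fun_prop) ?_
  filter_upwards [ae_muP n] with x hx
  have := prod_mem01 S x hx
  have h2 := sphi_nonneg α β γ x hx
  rw [Real.norm_of_nonneg (mul_nonneg this.1 h2)]
  exact mul_le_of_le_one_left h2 this.2

/-- unnormalised average of a monomial -/
def sA (α β γ : ℝ) {n : ℕ} (S : Finset (Fin n)) : ℝ :=
  ∫ x, (∏ i ∈ S, x i) * sphi α β γ x ∂(muP n)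

lemma sA_card (α β γ : ℝ) {n : ℕ} (S T : Finset (Fin n)) (h : S.card = T.card) :
    sA α β γ S = sA α β γ T := by
  let e : {x // x ∈ S} ≃ {x // x ∈ T} := Finset.equivOfCardEq h
  have hT : T = S.map e.extendSubtype.toEmbedding := by
    symm
    apply Finset.eq_of_subset_of_card_le
    · intro y hy
      obtain ⟨x, hx, rfl⟩ := Finset.mem_map.1 hy
      exact e.extendSubtype_mem x hx
    · rw [Finset.card_map, h]
  unfold sA
  have h := integral_perm e.extendSubtype (fun x => (∏ i ∈ S, x i) * sphi α β γ x)
  simp only [sphi_perm] at h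
  rw [← h]
  conv_rhs => rw [hT]
  simp only [Finset.prod_map]
  rfl

lemma sphi_integral_pos {α β γ : ℝ} (hα : -1 < α) (hβ : -1 < β) (hγ : 0 < γ) (n : ℕ) :
    0 < ∫ x, sphi α β γ x ∂(muP n) := by
  rw [integral_pos_iff_support_of_nonneg_ae ?_ (integrable_sphi hα hβ hγ n)]
  swap
  · filter_upwards [ae_muP n] with x hx using sphi_nonneg α β γ x hx
  have hopen : IsOpen ((Set.univ.pi fun _ : Fin n => Set.Ioo (0 : ℝ) 1) ∩ {x | vdm x ≠ 0}) :=
    (isOpen_set_pi Set.finite_univ fun _ _ => isOpen_Ioo).inter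
      (isOpen_ne_fun measurable_vdm continuous_const)
  have hne : ((Set.univ.pi fun _ : Fin n => Set.Ioo (0 : ℝ) 1) ∩ {x | vdm x ≠ 0}).Nonempty := by
    refine ⟨fun i => ((i : ℕ) + 1 : ℝ) / (n + 1), ?_, ?_⟩
    · intro i _
      have : ((i : ℕ) : ℝ) < n := by exact_mod_cast i.2
      constructor
      · positivity
      · rw [div_lt_one (by positivity)]; linarith
    · show vdm _ ≠ 0
      rw [← abs_ne_zero, abs_vdm, abs_ne_zero, Matrix.det_vandermonde_ne_zero_iff]
      intro i j hij
      have h0 : (n + 1 : ℝ) ≠ 0 := by positivity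
      simp only at hij
      rw [div_left_inj' h0] at hij
      have : ((i : ℕ) : ℝ) = (j : ℕ) := by linarith
      exact Fin.ext (by exact_mod_cast this)
  have hpos := hopen.measure_pos volume hne
  refine hpos.trans_le ?_
  rw [muP_eq, Measure.restrict_apply' (MeasurableSet.univ_pi fun _ => measurableSet_Ioo)]
  refine measure_mono ?_
  rintro x ⟨hx, hv⟩
  refine ⟨?_, hx⟩
  have hx' : ∀ i, x i ∈ Set.Ioo (0 : ℝ) 1 := fun i => hx i (Set.mem_univ i)
  rw [Function.mem_support]
  exact (mul_pos (rpow_pos_of_pos (abs_pos.2 hv) _)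
    (Finset.prod_pos fun i _ => w_pos α β (hx' i))).ne'

/-- truncated singular kernel -/
def hK (γ : ℝ) (u : ℝ) : ℝ := (Set.Ioc (-1 : ℝ) 1).indicator (fun u => |u| ^ (2 * γ - 1)) u

lemma hK_nonneg (γ u : ℝ) : 0 ≤ hK γ u :=
  Set.indicator_nonneg (fun _ _ => rpow_nonneg (abs_nonneg _) _) _

lemma measurable_hK (γ : ℝ) : Measurable (hK γ) := by
  unfold hK
  exact Measurable.indicator (by fun_prop) measurableSet_Ioc

lemma integrable_hK {γ : ℝ} (hγ : 0 < γ) : Integrable (hK γ) volume := by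
  unfold hK
  rw [integrable_indicator_iff measurableSet_Ioc,
    ← intervalIntegrable_iff_integrableOn_Ioc_of_le (by norm_num)]
  have h1 : IntervalIntegrable (fun u : ℝ => |u| ^ (2 * γ - 1)) volume 0 1 := by
    have := intervalIntegral.intervalIntegrable_rpow' (a := 0) (b := 1) (r := 2 * γ - 1)
      (by linarith)
    refine this.congr ?_
    intro u hu
    rw [Set.uIoc_of_le zero_le_one] at hu
    simp [abs_of_pos hu.1]
  have h2 : IntervalIntegrable (fun u : ℝ => |u| ^ (2 * γ - 1)) volume (-1) 0 := by
    rw [IntervalIntegrable.iff_comp_neg]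
    simpa using h1.symm
  exact h2.trans h1

lemma cons_mp (k : ℕ) : MeasurePreserving
    (MeasurableEquiv.piFinSuccAbove (fun _ : Fin (k + 1) => ℝ) 0).symm
    (mu1.prod (muP k)) (muP (k + 1)) :=
  (measurePreserving_piFinSuccAbove (fun _ : Fin (k + 1) => mu1) 0).symm

lemma cons_apply {k : ℕ} (p : ℝ × (Fin k → ℝ)) :
    (MeasurableEquiv.piFinSuccAbove (fun _ : Fin (k + 1) => ℝ) 0).symm p =
      (Fin.cons p.1 p.2 : Fin (k + 1) → ℝ) := by
  simp [MeasurableEquiv.piFinSuccAbove]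
  rfl

lemma split_integrable {k : ℕ} (F : (Fin (k + 1) → ℝ) → ℝ) :
    Integrable (fun p : ℝ × (Fin k → ℝ) => F (Fin.cons p.1 p.2)) (mu1.prod (muP k)) ↔
      Integrable F (muP (k + 1)) := by
  rw [← (cons_mp k).integrable_comp_emb (MeasurableEquiv.measurableEmbedding _)]
  have : F ∘ (MeasurableEquiv.piFinSuccAbove (fun _ : Fin (k + 1) => ℝ) 0).symm
    = fun p : ℝ × (Fin k → ℝ) => F (Fin.cons p.1 p.2) := by
    ext p; rw [Function.comp_apply, cons_apply]
  rw [this]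

lemma split_integral {k : ℕ} (F : (Fin (k + 1) → ℝ) → ℝ) (hF : Integrable F (muP (k + 1))) :
    ∫ x, F x ∂(muP (k + 1)) = ∫ y, ∫ t, F (Fin.cons t y) ∂mu1 ∂(muP k) := by
  rw [← (cons_mp k).integral_comp' F]
  simp only [cons_apply]
  exact integral_prod_symm _ ((split_integrable F).2 hF)

lemma integrable_kernel {α β γ : ℝ} (hα : -1 < α) (hβ : -1 < β) (hγ : 0 < γ) {k : ℕ} (j : Fin k) :
    Integrable (fun x : Fin (k + 1) → ℝ => hK γ (x 0 - x j.succ) *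
      ∏ i : Fin k, (x i.succ ^ α * (1 - x i.succ) ^ β)) (muP (k + 1)) := by
  rw [← split_integrable]
  simp only [Fin.cons_zero, Fin.cons_succ]
  have hm := measurable_hK γ
  rw [integrable_prod_iff' (by fun_prop)]
  constructor
  · refine Eventually.of_forall fun y => ?_
    have h1 : Integrable (fun t => hK γ (t - y j)) mu1 :=
      ((integrable_hK hγ).comp_sub_right (y j)).mono_measure Measure.restrict_le_self
    exact h1.mul_const (∏ i : Fin k, (y i ^ α * (1 - y i) ^ β))
  · have hm2 : AEStronglyMeasurable (fun y : Fin k → ℝ => ∫ t, ‖hK γ (t - y j) *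
      ∏ i : Fin k, (y i ^ α * (1 - y i) ^ β)‖ ∂mu1) (muP k) := by
      refine AEStronglyMeasurable.integral_prod_right' (f := fun p : (Fin k → ℝ) × ℝ =>
        ‖hK γ (p.2 - p.1 j) * ∏ i : Fin k, (p.1 i ^ α * (1 - p.1 i) ^ β)‖) ?_
      fun_prop
    refine ((integrable_prod_w hα hβ k).norm.const_mul (∫ u, hK γ u)).mono' hm2 ?_
    refine Eventually.of_forall fun y => ?_
    rw [Real.norm_of_nonneg (integral_nonneg fun _ => norm_nonneg _)]
    simp only [norm_mul (hK γ _), integral_mul_const]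
    refine mul_le_mul_of_nonneg_right ?_ (norm_nonneg _)
    rw [← integral_sub_right_eq_self (hK γ) (y j)]
    simp only [Real.norm_of_nonneg (hK_nonneg γ _)]
    exact setIntegral_le_integral ((integrable_hK hγ).comp_sub_right (y j))
      (Eventually.of_forall fun t => hK_nonneg γ _)

lemma integrable_G {α β γ : ℝ} (hα : -1 < α) (hβ : -1 < β) (hγ : 0 < γ) {k : ℕ} (j : Fin k)
    (S : Finset (Fin k)) :
    Integrable (fun x : Fin (k + 1) → ℝ => (∏ i ∈ S, x i.succ) * (x 0 * (1 - x 0)) *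
      sphi α β γ x / (x 0 - x j.succ)) (muP (k + 1)) := by
  have hm := measurable_sphi α β γ (n := k + 1)
  refine (integrable_kernel hα hβ hγ j).mono' (Measurable.aestronglyMeasurable (by fun_prop)) ?_
  filter_upwards [ae_muP (k + 1)] with x hx
  have hW : 0 ≤ ∏ i : Fin k, (x i.succ ^ α * (1 - x i.succ) ^ β) :=
    Finset.prod_nonneg fun i _ => (w_pos α β (hx i.succ)).le
  by_cases h0 : x 0 = x j.succ
  · rw [h0, sub_self, div_zero, norm_zero]
    exact mul_nonneg (hK_nonneg _ _) hW
  have hd : 0 < |x 0 - x j.succ| := abs_pos.2 (sub_ne_zero.2 h0)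
  have h00 := hx 0
  have hj := hx j.succ
  have hK1 : hK γ (x 0 - x j.succ) = |x 0 - x j.succ| ^ (2 * γ) / |x 0 - x j.succ| := by
    unfold hK
    rw [Set.indicator_of_mem, rpow_sub_one hd.ne']
    constructor <;> linarith [h00.1, h00.2, hj.1, hj.2]
  have hS : 0 ≤ ∏ i ∈ S, x i.succ ∧ ∏ i ∈ S, x i.succ ≤ 1 :=
    prod_mem01 S (fun i => x i.succ) fun i => hx i.succ
  have hsp : sphi α β γ x ≤ |x 0 - x j.succ| ^ (2 * γ) * ((x 0 ^ α * (1 - x 0) ^ β) *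
      ∏ i : Fin k, (x i.succ ^ α * (1 - x i.succ) ^ β)) := by
    unfold sphi
    rw [Fin.prod_univ_succ]
    refine mul_le_mul_of_nonneg_right ?_ (mul_nonneg (w_pos α β h00).le hW)
    refine rpow_le_rpow (abs_nonneg _) ?_ (by positivity)
    rw [vdm_succ, abs_mul, Finset.abs_prod, ← Finset.mul_prod_erase _ _ (Finset.mem_univ j), mul_assoc]
    refine mul_le_of_le_one_right (abs_nonneg _) ?_
    refine mul_le_one₀ (Finset.prod_le_one (fun _ _ => abs_nonneg _) fun i _ => ?_) (abs_nonneg _)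
      (abs_vdm_le_one _ fun i => hx i.succ)
    have h2 := hx i.succ
    rw [abs_le]; constructor <;> linarith [h00.1, h00.2, h2.1, h2.2]
  have hw1 : x 0 * (1 - x 0) * (x 0 ^ α * (1 - x 0) ^ β) ≤ 1 := by
    have e : x 0 * (1 - x 0) * (x 0 ^ α * (1 - x 0) ^ β) = x 0 ^ (α + 1) * (1 - x 0) ^ (β + 1) := by
      rw [rpow_add_one h00.1.ne', rpow_add_one (by linarith [h00.2])]; ring
    rw [e]
    exact mul_le_one₀ (rpow_le_one h00.1.le h00.2.le (by linarith))
      (rpow_nonneg (by linarith [h00.2]) _)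
      (rpow_le_one (by linarith [h00.2]) (by linarith [h00.1]) (by linarith))
  have hx01 : 0 ≤ x 0 * (1 - x 0) := mul_nonneg h00.1.le (by linarith [h00.2])
  rw [norm_div, Real.norm_of_nonneg (mul_nonneg (mul_nonneg hS.1 hx01) (sphi_nonneg α β γ x hx)),
    Real.norm_eq_abs, hK1, div_mul_eq_mul_div, div_le_div_iff_of_pos_right hd]
  have hD : 0 ≤ |x 0 - x j.succ| ^ (2 * γ) := rpow_nonneg hd.le _
  calc (∏ i ∈ S, x i.succ) * (x 0 * (1 - x 0)) * sphi α β γ x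
      ≤ 1 * (x 0 * (1 - x 0)) * (|x 0 - x j.succ| ^ (2 * γ) * ((x 0 ^ α * (1 - x 0) ^ β) *
        ∏ i : Fin k, (x i.succ ^ α * (1 - x i.succ) ^ β))) := by
        refine mul_le_mul ?_ hsp (sphi_nonneg α β γ x hx) (by linarith)
        exact mul_le_mul_of_nonneg_right hS.2 hx01
    _ = (x 0 * (1 - x 0) * (x 0 ^ α * (1 - x 0) ^ β)) * (|x 0 - x j.succ| ^ (2 * γ) *
        ∏ i : Fin k, (x i.succ ^ α * (1 - x i.succ) ^ β)) := by ring
    _ ≤ _ := mul_le_of_le_one_left (mul_nonneg hD hW) hw1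

/-- logarithmic derivative form -/
lemma ld_mul {f g : ℝ → ℝ} {a b t : ℝ} (hf : HasDerivAt f (f t * a) t)
    (hg : HasDerivAt g (g t * b) t) :
    HasDerivAt (fun s => f s * g s) (f t * g t * (a + b)) t := by
  exact (hf.mul hg).congr_deriv (by ring)

lemma ld_prod {ι : Type*} (s : Finset ι) (f : ι → ℝ → ℝ) (a : ι → ℝ) (t : ℝ)
    (h : ∀ i ∈ s, HasDerivAt (f i) (f i t * a i) t) :
    HasDerivAt (fun u => ∏ i ∈ s, f i u) ((∏ i ∈ s, f i t) * ∑ i ∈ s, a i) t := by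
  classical
  induction s using Finset.induction_on with
  | empty => simpa using hasDerivAt_const t (1 : ℝ)
  | insert i s hi ih =>
    simp only [Finset.prod_insert hi, Finset.sum_insert hi]
    exact ld_mul (h i (Finset.mem_insert_self _ _))
      (ih fun j hj => h j (Finset.mem_insert_of_mem hj))

lemma ld_abs (c r t : ℝ) (h : t ≠ c) :
    HasDerivAt (fun u => |u - c| ^ r) (|t - c| ^ r * (r / (t - c))) t := by
  have hne : t - c ≠ 0 := sub_ne_zero.2 h
  rcases lt_or_gt_of_ne hne with h1 | h1
  · have h2 : HasDerivAt (fun u : ℝ => (c - u) ^ r) (-1 * r * (c - t) ^ (r - 1)) t :=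
      ((hasDerivAt_id t).const_sub c).rpow_const (Or.inl (by simp; linarith))
    have : HasDerivAt (fun u => |u - c| ^ r) (-1 * r * (c - t) ^ (r - 1)) t := by
      refine h2.congr_of_eventuallyEq ?_
      filter_upwards [Iio_mem_nhds (show t < c by linarith)] with u hu
      rw [abs_of_neg (by simpa using hu), neg_sub]
    convert this using 1
    have h3 : c - t ≠ 0 := by intro h; apply hne; linarith
    rw [abs_of_neg h1, neg_sub, rpow_sub_one h3]
    field_simp
    grind
  · have h2 : HasDerivAt (fun u : ℝ => (u - c) ^ r) (1 * r * (t - c) ^ (r - 1)) t :=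
      ((hasDerivAt_id t).sub_const c).rpow_const (Or.inl hne)
    have : HasDerivAt (fun u => |u - c| ^ r) (1 * r * (t - c) ^ (r - 1)) t := by
      refine h2.congr_of_eventuallyEq ?_
      filter_upwards [Ioi_mem_nhds (show c < t by linarith)] with u hu
      rw [abs_of_pos (by simpa using hu)]
    convert this using 1
    rw [abs_of_pos h1, rpow_sub_one hne]
    field_simp

/-- the derivative integrand in Aomoto's argument -/
def sD (α β γ : ℝ) {k : ℕ} (S : Finset (Fin k)) (x : Fin (k + 1) → ℝ) : ℝ :=
  (α + 1) * ((∏ i ∈ S, x i.succ) * sphi α β γ x)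
    - (α + β + 2) * (x 0 * (∏ i ∈ S, x i.succ) * sphi α β γ x)
    + 2 * γ * ∑ j : Fin k, (∏ i ∈ S, x i.succ) * (x 0 * (1 - x 0)) *
      sphi α β γ x / (x 0 - x j.succ)

lemma integrable_S' {α β γ : ℝ} (hα : -1 < α) (hβ : -1 < β) (hγ : 0 < γ) {k : ℕ}
    (S : Finset (Fin k)) :
    Integrable (fun x : Fin (k + 1) → ℝ => (∏ i ∈ S, x i.succ) * sphi α β γ x) (muP (k + 1)) := by
  have := integrable_S hα hβ hγ (S.map (Fin.succEmb k))
  simpa [Finset.prod_map] using this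

lemma integrable_S0 {α β γ : ℝ} (hα : -1 < α) (hβ : -1 < β) (hγ : 0 < γ) {k : ℕ}
    (S : Finset (Fin k)) :
    Integrable (fun x : Fin (k + 1) → ℝ => x 0 * (∏ i ∈ S, x i.succ) * sphi α β γ x)
      (muP (k + 1)) := by
  have := integrable_S hα hβ hγ (insert 0 (S.map (Fin.succEmb k)))
  simpa [Finset.prod_map, Finset.prod_insert] using this

lemma integrable_D {α β γ : ℝ} (hα : -1 < α) (hβ : -1 < β) (hγ : 0 < γ) {k : ℕ}
    (S : Finset (Fin k)) : Integrable (sD α β γ S) (muP (k + 1)) := by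
  unfold sD
  exact (((integrable_S' hα hβ hγ S).const_mul _).sub ((integrable_S0 hα hβ hγ S).const_mul _)).add
    ((integrable_finsetSum _ fun j _ => integrable_G hα hβ hγ j S).const_mul _)

lemma integral_D_eq {α β γ : ℝ} (hα : -1 < α) (hβ : -1 < β) (hγ : 0 < γ) {k : ℕ}
    (S : Finset (Fin k)) : ∫ x, sD α β γ S x ∂(muP (k + 1)) =
      (α + 1) * ∫ x : Fin (k + 1) → ℝ, (∏ i ∈ S, x i.succ) * sphi α β γ x ∂(muP (k + 1))
    - (α + β + 2) * ∫ x : Fin (k + 1) → ℝ, x 0 * (∏ i ∈ S, x i.succ) * sphi α β γ x ∂(muP (k + 1))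
    + 2 * γ * ∑ j : Fin k, ∫ x : Fin (k + 1) → ℝ, (∏ i ∈ S, x i.succ) * (x 0 * (1 - x 0)) *
      sphi α β γ x / (x 0 - x j.succ) ∂(muP (k + 1)) := by
  unfold sD
  have h1 := (integrable_S' hα hβ hγ S).const_mul (α + 1)
  have h2 := (integrable_S0 hα hβ hγ S).const_mul (α + β + 2)
  have h3 := (integrable_finsetSum Finset.univ
    fun j _ => integrable_G hα hβ hγ j S).const_mul (2 * γ)
  refine (integral_add (h1.sub h2) h3).trans ?_
  rw [integral_sub' h1 h2, integral_const_mul, integral_const_mul,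
    integral_const_mul, integral_finsetSum _ fun j _ => integrable_G hα hβ hγ j S]

lemma sphi_cons (α β γ : ℝ) {k : ℕ} (t : ℝ) (y : Fin k → ℝ) :
    sphi α β γ (Fin.cons t y : Fin (k + 1) → ℝ) =
      t ^ α * (1 - t) ^ β * (∏ j, |t - y j| ^ (2 * γ)) * sphi α β γ y := by
  unfold sphi
  rw [vdm_succ, Fin.prod_univ_succ]
  simp only [Fin.cons_zero, Fin.cons_succ]
  rw [abs_mul, Finset.abs_prod, mul_rpow (Finset.prod_nonneg fun _ _ => abs_nonneg _) (abs_nonneg _),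
    ← Real.finsetProd_rpow _ _ fun _ _ => abs_nonneg _]
  ring

lemma inner_zero {α β γ : ℝ} (hα : -1 < α) (hβ : -1 < β) (hγ : 0 < γ) {k : ℕ}
    (S : Finset (Fin k)) (y : Fin k → ℝ)
    (hi : Integrable (fun t => sD α β γ S (Fin.cons t y)) mu1) :
    ∫ t, sD α β γ S (Fin.cons t y) ∂mu1 = 0 := by
  unfold mu1 at hi ⊢
  rw [← integral_Ioc_eq_integral_Ioo, ← intervalIntegral.integral_of_le zero_le_one]
  have hc : Continuous (fun t : ℝ => (t ^ (α + 1) * (1 - t) ^ (β + 1)) * (∏ j, |t - y j| ^ (2 * γ)) *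
      ((∏ i ∈ S, y i) * sphi α β γ y)) := by
    have e1 : Continuous (fun t : ℝ => t ^ (α + 1)) :=
      continuous_id.rpow_const fun _ => Or.inr (by linarith)
    have e2 : Continuous (fun t : ℝ => (1 - t) ^ (β + 1)) :=
      (continuous_const.sub continuous_id).rpow_const fun _ => Or.inr (by linarith)
    have e3 : ∀ j, Continuous (fun t : ℝ => |t - y j| ^ (2 * γ)) := fun j =>
      (continuous_id.sub continuous_const).abs.rpow_const fun _ => Or.inr (by linarith)
    exact ((e1.mul e2).mul (continuous_finsetProd _ fun j _ => e3 j)).mul continuous_const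
  have key := integral_eq_of_hasDerivAt_off_countable_of_le
    (fun t : ℝ => (t ^ (α + 1) * (1 - t) ^ (β + 1)) * (∏ j, |t - y j| ^ (2 * γ)) *
      ((∏ i ∈ S, y i) * sphi α β γ y)) (fun t => sD α β γ S (Fin.cons t y)) (zero_le_one' ℝ)
    (s := Set.range y) (Set.countable_range y) hc.continuousOn ?_
    ((intervalIntegrable_iff_integrableOn_Ioo_of_le zero_le_one).2 hi)
  · rw [key]
    simp [zero_rpow (show α + 1 ≠ 0 by linarith), zero_rpow (show β + 1 ≠ 0 by linarith)]
  · rintro t ⟨ht, hty⟩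
    have ht0 : t ≠ 0 := ht.1.ne'
    have ht1 : 1 - t ≠ 0 := by linarith [ht.2]
    have hy : ∀ j, t ≠ y j := fun j h => hty ⟨j, h.symm⟩
    have d1 : HasDerivAt (fun u : ℝ => u ^ (α + 1)) (t ^ (α + 1) * ((α + 1) / t)) t := by
      refine (Real.hasDerivAt_rpow_const (Or.inl ht0)).congr_deriv ?_
      rw [add_sub_cancel_right, rpow_add_one ht0]; field_simp
    have d2 : HasDerivAt (fun u : ℝ => (1 - u) ^ (β + 1))
        ((1 - t) ^ (β + 1) * (-(β + 1) / (1 - t))) t := by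
      have : HasDerivAt (fun u : ℝ => (1 - u) ^ (β + 1)) (-1 * (β + 1) * (1 - t) ^ (β + 1 - 1)) t :=
        ((hasDerivAt_id t).const_sub 1).rpow_const (Or.inl ht1)
      refine this.congr_deriv ?_
      rw [add_sub_cancel_right, rpow_add_one ht1]; field_simp
    have d3 := ld_prod Finset.univ (fun j u => |u - y j| ^ (2 * γ)) (fun j => 2 * γ / (t - y j)) t
      fun j _ => ld_abs (y j) (2 * γ) t (hy j)
    refine ((ld_mul (ld_mul d1 d2) d3).mul_const ((∏ i ∈ S, y i) * sphi α β γ y)).congr_deriv ?_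
    unfold sD
    simp only [sphi_cons, Fin.cons_zero, Fin.cons_succ]
    rw [rpow_add_one ht0, rpow_add_one ht1]
    have e : ∑ j, 2 * γ / (t - y j) = 2 * γ * ∑ j, (t - y j)⁻¹ := by
      rw [Finset.mul_sum]; rfl
    rw [e]
    simp only [div_eq_mul_inv _ (t - _), ← Finset.mul_sum]
    generalize ∑ j, (t - y j)⁻¹ = R
    field_simp
    ring

lemma integral_D_zero {α β γ : ℝ} (hα : -1 < α) (hβ : -1 < β) (hγ : 0 < γ) {k : ℕ}
    (S : Finset (Fin k)) : ∫ x, sD α β γ S x ∂(muP (k + 1)) = 0 := by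
  have hD := integrable_D hα hβ hγ S
  rw [split_integral _ hD]
  have := ((split_integrable _).2 hD).prod_left_ae
  rw [integral_eq_zero_of_ae]
  filter_upwards [this] with y hy
  exact inner_zero hα hβ hγ S y hy

lemma integral_G {α β γ : ℝ} (hα : -1 < α) (hβ : -1 < β) (hγ : 0 < γ) {k : ℕ} (j : Fin k)
    (S : Finset (Fin k)) (q : (Fin (k + 1) → ℝ) → ℝ)
    (hq : ∀ x : Fin (k + 1) → ℝ, (∏ i ∈ S, x i.succ) * (x 0 * (1 - x 0)) -
      (∏ i ∈ S, x (Equiv.swap 0 j.succ i.succ)) * (x j.succ * (1 - x j.succ)) =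
      (x 0 - x j.succ) * q x) :
    2 * ∫ x : Fin (k + 1) → ℝ, (∏ i ∈ S, x i.succ) * (x 0 * (1 - x 0)) *
      sphi α β γ x / (x 0 - x j.succ) ∂(muP (k + 1)) =
    ∫ x : Fin (k + 1) → ℝ, q x * sphi α β γ x ∂(muP (k + 1)) := by
  have hG := integrable_G hα hβ hγ j S
  have hs := integral_perm (Equiv.swap 0 j.succ) (fun x : Fin (k + 1) → ℝ =>
    (∏ i ∈ S, x i.succ) * (x 0 * (1 - x 0)) * sphi α β γ x / (x 0 - x j.succ))
  simp only [sphi_perm, Equiv.swap_apply_left, Equiv.swap_apply_right] at hs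
  have hp : ∀ x : Fin (k + 1) → ℝ, (∏ i ∈ S, x (Equiv.swap 0 j.succ i.succ)) *
      (x j.succ * (1 - x j.succ)) * sphi α β γ x / (x j.succ - x 0) = q x * sphi α β γ x -
      (∏ i ∈ S, x i.succ) * (x 0 * (1 - x 0)) * sphi α β γ x / (x 0 - x j.succ) := by
    intro x
    by_cases h : x 0 = x j.succ
    · rw [sphi_eq_zero α β hγ x (Fin.succ_ne_zero j).symm h]; simp
    · have h1 : x 0 - x j.succ ≠ 0 := sub_ne_zero.2 h
      have h2 : x j.succ - x 0 ≠ 0 := sub_ne_zero.2 (Ne.symm h)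
      have := hq x
      rw [← neg_sub (x 0), div_neg, neg_eq_iff_eq_neg, div_eq_iff h1]
      rw [neg_mul, sub_mul, div_mul_cancel₀ _ h1]
      linear_combination (-sphi α β γ x) * this
  have hqi : Integrable (fun x : Fin (k + 1) → ℝ => q x * sphi α β γ x) (muP (k + 1)) := by
    have h := (measurePreserving_arrowCongr' (fun _ : Fin (k + 1) => mu1)
      (fun _ : Fin (k + 1) => mu1) (Equiv.swap 0 j.succ).symm
      (MeasurableEquiv.refl ℝ) (fun _ => MeasurePreserving.id _)).integrable_comp_of_integrable hG
    have h' : Integrable (fun x : Fin (k + 1) → ℝ => (∏ i ∈ S, x (Equiv.swap 0 j.succ i.succ)) *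
      (x (Equiv.swap 0 j.succ 0) * (1 - x (Equiv.swap 0 j.succ 0))) *
      sphi α β γ (fun i => x (Equiv.swap 0 j.succ i)) /
      (x (Equiv.swap 0 j.succ 0) - x (Equiv.swap 0 j.succ j.succ))) (muP (k + 1)) := h
    simp only [sphi_perm, Equiv.swap_apply_left, Equiv.swap_apply_right, hp] at h'
    refine (h'.add hG).congr (Eventually.of_forall fun x => ?_)
    simp
  simp only [hp] at hs
  rw [integral_sub hqi hG] at hs
  linarith

lemma integral_G_mem {α β γ : ℝ} (hα : -1 < α) (hβ : -1 < β) (hγ : 0 < γ) {k : ℕ} (j : Fin k)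
    (S : Finset (Fin k)) (hj : j ∈ S) :
    2 * ∫ x : Fin (k + 1) → ℝ, (∏ i ∈ S, x i.succ) * (x 0 * (1 - x 0)) *
      sphi α β γ x / (x 0 - x j.succ) ∂(muP (k + 1)) =
    - ∫ x : Fin (k + 1) → ℝ, x 0 * (∏ i ∈ S, x i.succ) * sphi α β γ x ∂(muP (k + 1)) := by
  rw [integral_G hα hβ hγ j S (fun x => - (x 0 * (∏ i ∈ S, x i.succ))), ← integral_neg]
  · simp only [neg_mul]
  · intro x
    rw [← Finset.mul_prod_erase _ _ hj, ← Finset.mul_prod_erase _ _ hj, Equiv.swap_apply_right]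
    have : ∏ i ∈ S.erase j, x (Equiv.swap 0 j.succ i.succ) = ∏ i ∈ S.erase j, x i.succ := by
      refine Finset.prod_congr rfl fun i hi => ?_
      rw [Equiv.swap_apply_of_ne_of_ne (Fin.succ_ne_zero i)]
      intro h
      exact (Finset.mem_erase.1 hi).1 (Fin.succ_injective _ h)
    rw [this]; ring

lemma integral_G_notMem {α β γ : ℝ} (hα : -1 < α) (hβ : -1 < β) (hγ : 0 < γ) {k : ℕ} (j : Fin k)
    (S : Finset (Fin k)) (hj : j ∉ S) :
    2 * ∫ x : Fin (k + 1) → ℝ, (∏ i ∈ S, x i.succ) * (x 0 * (1 - x 0)) *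
      sphi α β γ x / (x 0 - x j.succ) ∂(muP (k + 1)) =
    (∫ x : Fin (k + 1) → ℝ, (∏ i ∈ S, x i.succ) * sphi α β γ x ∂(muP (k + 1))) -
    2 * ∫ x : Fin (k + 1) → ℝ, x 0 * (∏ i ∈ S, x i.succ) * sphi α β γ x ∂(muP (k + 1)) := by
  have hprod : ∀ x : Fin (k + 1) → ℝ,
      ∏ i ∈ S, x (Equiv.swap 0 j.succ i.succ) = ∏ i ∈ S, x i.succ := by
    intro x
    refine Finset.prod_congr rfl fun i hi => ?_
    rw [Equiv.swap_apply_of_ne_of_ne (Fin.succ_ne_zero i)]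
    intro h
    exact hj ((Fin.succ_injective _ h) ▸ hi)
  have h1 := integrable_S' hα hβ hγ S
  have h2 := integrable_S0 hα hβ hγ S
  have h3 : Integrable (fun x : Fin (k + 1) → ℝ => x j.succ * (∏ i ∈ S, x i.succ) * sphi α β γ x)
      (muP (k + 1)) := by
    simpa [Finset.prod_insert hj] using integrable_S' hα hβ hγ (insert j S)
  have h4 : ∫ x : Fin (k + 1) → ℝ, x j.succ * (∏ i ∈ S, x i.succ) * sphi α β γ x ∂(muP (k + 1)) =
      ∫ x : Fin (k + 1) → ℝ, x 0 * (∏ i ∈ S, x i.succ) * sphi α β γ x ∂(muP (k + 1)) := by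
    have := integral_perm (Equiv.swap 0 j.succ)
      (fun x : Fin (k + 1) → ℝ => x 0 * (∏ i ∈ S, x i.succ) * sphi α β γ x)
    simpa only [sphi_perm, Equiv.swap_apply_left, hprod] using this
  rw [integral_G hα hβ hγ j S (fun x => (1 - x 0 - x j.succ) * (∏ i ∈ S, x i.succ))]
  · have e : ∀ x : Fin (k + 1) → ℝ, (1 - x 0 - x j.succ) * (∏ i ∈ S, x i.succ) * sphi α β γ x =
      (∏ i ∈ S, x i.succ) * sphi α β γ x - x 0 * (∏ i ∈ S, x i.succ) * sphi α β γ x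
      - x j.succ * (∏ i ∈ S, x i.succ) * sphi α β γ x := fun x => by ring
    simp only [e]
    refine (integral_sub (h1.sub h2) h3).trans ?_
    rw [integral_sub' h1 h2, h4]
    ring
  · intro x
    rw [hprod]; ring

lemma recur {α β γ : ℝ} (hα : -1 < α) (hβ : -1 < β) (hγ : 0 < γ) {k : ℕ} (S : Finset (Fin k)) :
    (∫ x : Fin (k + 1) → ℝ, (∏ i ∈ S, x i.succ) * sphi α β γ x ∂(muP (k + 1))) *
      (α + 1 + ((k : ℝ) - S.card) * γ) =
    (∫ x : Fin (k + 1) → ℝ, x 0 * (∏ i ∈ S, x i.succ) * sphi α β γ x ∂(muP (k + 1))) *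
      (α + β + 2 + (2 * (k : ℝ) - S.card) * γ) := by
  have h0 := integral_D_zero hα hβ hγ S
  rw [integral_D_eq hα hβ hγ S, mul_comm 2 γ, mul_assoc, Finset.mul_sum,
    ← Finset.sum_add_sum_compl S, Finset.sum_congr rfl fun j hj => integral_G_mem hα hβ hγ j S hj,
    Finset.sum_congr rfl fun j hj => integral_G_notMem hα hβ hγ j S (Finset.mem_compl.1 hj)] at h0
  simp only [Finset.sum_const, nsmul_eq_mul, Finset.card_compl, Fintype.card_fin] at h0
  rw [Nat.cast_sub (by simpa using Finset.card_le_univ S)] at h0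
  linear_combination h0

lemma sA_recur {α β γ : ℝ} (hα : -1 < α) (hβ : -1 < β) (hγ : 0 < γ) {k s : ℕ} (hs : s ≤ k) :
    sA α β γ (Finset.univ.filter fun j : Fin (k + 1) => (j : ℕ) < s) *
      (α + 1 + ((k : ℝ) - s) * γ) =
    sA α β γ (Finset.univ.filter fun j : Fin (k + 1) => (j : ℕ) < s + 1) *
      (α + β + 2 + (2 * (k : ℝ) - s) * γ) := by
  have hcard : (Finset.univ.filter fun j : Fin k => (j : ℕ) < s).card = s := by
    rw [Fin.card_filter_val_lt]; omega
  have h := recur hα hβ hγ (Finset.univ.filter fun j : Fin k => (j : ℕ) < s)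
  rw [hcard] at h
  rw [sA_card α β γ (Finset.univ.filter fun j : Fin (k + 1) => (j : ℕ) < s)
    ((Finset.univ.filter fun j : Fin k => (j : ℕ) < s).map (Fin.succEmb k)),
    sA_card α β γ (Finset.univ.filter fun j : Fin (k + 1) => (j : ℕ) < s + 1)
    (insert 0 ((Finset.univ.filter fun j : Fin k => (j : ℕ) < s).map (Fin.succEmb k)))]
  · unfold sA
    simpa [Finset.prod_map, Finset.prod_insert] using h
  · rw [Finset.card_insert_of_notMem (by simp), Finset.card_map, hcard, Fin.card_filter_val_lt]
    omega
  · rw [Finset.card_map, hcard, Fin.card_filter_val_lt]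
    omega

lemma sA_ratio {α β γ : ℝ} (hα : -1 < α) (hβ : -1 < β) (hγ : 0 < γ) {k m : ℕ} (hm : m ≤ k + 1) :
    sA α β γ (Finset.univ.filter fun j : Fin (k + 1) => (j : ℕ) < m) =
    (∏ j ∈ Finset.range m, (α + 1 + ((k : ℝ) - j) * γ) / (α + β + 2 + (2 * (k : ℝ) - j) * γ)) *
      ∫ x : Fin (k + 1) → ℝ, sphi α β γ x ∂(muP (k + 1)) := by
  induction m with
  | zero => simp [sA]
  | succ m ih =>
    have h := sA_recur hα hβ hγ (show m ≤ k by omega)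
    have hmk : (m : ℝ) ≤ k := by exact_mod_cast (show m ≤ k by omega)
    have hpos : 0 < α + β + 2 + (2 * (k : ℝ) - m) * γ := by
      have : 0 ≤ (2 * (k : ℝ) - m) * γ := mul_nonneg (by linarith [(Nat.cast_nonneg m : (0:ℝ) ≤ m)]) hγ.le
      linarith
    rw [ih (by omega)] at h
    rw [Finset.prod_range_succ, ← mul_right_cancel_iff_of_pos hpos, ← h, mul_right_comm _ (_ / _), mul_assoc _ (_ / _) _,
      div_mul_cancel₀ _ hpos.ne']

/-- the Aomoto–Selberg average
`⟨x₁⋯x_m⟩ = ∏_{j=1}^m (α + 1 + (n−j)γ)/(α + β + 2 + (2n−j−1)γ)`. -/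
theorem statement14 (n m : ℕ) (hn : 1 ≤ n) (hm : 1 ≤ m) (hmn : m ≤ n)
    (α β γ : ℝ) (hα : -1 < α) (hβ : -1 < β) (hγ : 0 < γ) :
    (∫ x in Set.univ.pi fun _ : Fin n => Set.Icc (0 : ℝ) 1,
        (∏ j ∈ Finset.univ.filter fun j : Fin n => (j : ℕ) < m, x j) *
          |vdm x| ^ (2 * γ) * ∏ j, (x j ^ α * (1 - x j) ^ β)) /
      (∫ x in Set.univ.pi fun _ : Fin n => Set.Icc (0 : ℝ) 1,
        |vdm x| ^ (2 * γ) * ∏ j, (x j ^ α * (1 - x j) ^ β)) =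
    ∏ j ∈ Finset.range m,
      (α + 1 + ((n : ℝ) - 1 - j) * γ) / (α + β + 2 + (2 * (n : ℝ) - j - 2) * γ) := by
  obtain ⟨k, rfl⟩ : ∃ k, n = k + 1 := ⟨n - 1, by omega⟩
  have h := sA_ratio hα hβ hγ hmn
  have hp := sphi_integral_pos hα hβ hγ (k + 1)
  unfold sA at h
  rw [muP_eq'] at h hp
  unfold sphi at h hp
  simp only [← mul_assoc] at h
  rw [div_eq_iff hp.ne', h]
  congr 1
  refine Finset.prod_congr rfl fun j _ => ?_
  push_cast
  congr 1 <;> ring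

end
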